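/- Let (H,A,C) be a Doi-Hopf datum. The assignments θ ↦ λ_θ, where λ_θ(c⊗d) = Σ c_(1) ⊗ θ(c_(2)⊗d), and λ ↦ θ_λ = (ε_C⊗I_A)∘λ are mutually inverse k-linear bijections between V_3 and V_2; moreover θ is normalized if and only if λ_θ is normalized. -/

import Mathlib

/-!
The counit law gives `θ_{λ_θ} = θ` for every `θ`, and applying `I ⊗ ε ⊗ I` to condition (iii) gives
`λ_{θ_l} = l`. The left-hand side of condition (i) for `l` is the right-hand side of (b) for
`θ_l`, so (i) and (b) correspond to each other. Condition (iii) for `λ_θ` is coassociativity of `C`.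

Condition (a) for `θ_l` is `ε ⊗ I` applied to (ii), since `ε(e·h) = ε(e)ε(h)`. Conversely
(`toV2_ii`), multiplicativity of `Δ_C` and coassociativity of `ρ` give
`Σ a_{<0>}·λ_θ(c·a_{<-2>} ⊗ d·a_{<-1>}) = Σ c_(1)·a_{<-3>} ⊗ a_{<0>} θ(c_(2)·a_{<-2>} ⊗ d·a_{<-1>})`,
and (a) turns the right-hand side into `Σ c_(1)·a_{<-1>} ⊗ θ(c_(2) ⊗ d) a_{<0>}`.
-/

open TensorProduct

noncomputable section

/-- A Doi-Hopf datum `(H, A, C)`: `H` is a `k`-bialgebra, `A` is a left `H`-comodule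
algebra (with coaction `ρ`), and `C` is a right `H`-module coalgebra (with action `act`). -/
structure DoiHopfDatum (k H A C : Type*) [CommRing k] [Ring H] [Bialgebra k H]
    [Ring A] [Algebra k A] [AddCommGroup C] [Module k C] [Coalgebra k C] where
  /-- the coaction `ρ_A : A → H ⊗ A`, `ρ a = Σ a_{<-1>} ⊗ a_{<0>}` -/
  ρ : A →ₗ[k] H ⊗[k] A
  ρ_coassoc : ∀ a : A,
    (TensorProduct.assoc k H H A)
        ((TensorProduct.map (Coalgebra.comul (R := k)) LinearMap.id) (ρ a))
      = (TensorProduct.map LinearMap.id ρ) (ρ a)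
  ρ_counit : ∀ a : A,
    (TensorProduct.lid k A)
        ((TensorProduct.map (Coalgebra.counit (R := k)) LinearMap.id) (ρ a)) = a
  ρ_mul : ∀ a b : A, ρ (a * b) = ρ a * ρ b
  ρ_one : ρ 1 = 1
  /-- the right `H`-action on `C`, written `act c h = c · h` -/
  act : C →ₗ[k] H →ₗ[k] C
  act_one : ∀ c : C, act c 1 = c
  act_mul : ∀ (c : C) (g h : H), act (act c g) h = act c (g * h)
  comul_act : ∀ (c : C) (h : H),
    Coalgebra.comul (R := k) (act c h)
      = (TensorProduct.map (TensorProduct.lift act) (TensorProduct.lift act))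
          ((TensorProduct.tensorTensorTensorComm k C C H H)
            (Coalgebra.comul (R := k) c ⊗ₜ[k] Coalgebra.comul (R := k) h))
  counit_act : ∀ (c : C) (h : H),
    Coalgebra.counit (R := k) (act c h)
      = Coalgebra.counit (R := k) c * Coalgebra.counit (R := k) h

namespace DoiHopfDatum

variable {k H A C : Type*} [CommRing k] [Ring H] [Bialgebra k H]
    [Ring A] [Algebra k A] [AddCommGroup C] [Module k C] [Coalgebra k C]
variable (D : DoiHopfDatum k H A C)

/-- The action `C ⊗ H → C` as a linear map on the tensor product. -/
def actL : C ⊗[k] H →ₗ[k] C := TensorProduct.lift D.act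

/-- The iterated coaction `a ↦ Σ (a_{<-2>} ⊗ a_{<-1>}) ⊗ a_{<0>}`. -/
def ρ2 : A →ₗ[k] (H ⊗[k] H) ⊗[k] A :=
  (TensorProduct.assoc k H H A).symm.toLinearMap ∘ₗ
    (TensorProduct.map LinearMap.id D.ρ) ∘ₗ D.ρ

/-- The simultaneous action of `H ⊗ H` on `C ⊗ C`. -/
def act2 : (C ⊗[k] C) ⊗[k] (H ⊗[k] H) →ₗ[k] C ⊗[k] C :=
  (TensorProduct.map D.actL D.actL) ∘ₗ
    (TensorProduct.tensorTensorTensorComm k C C H H).toLinearMap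

/-- The right `A`-action on `C ⊗ A`: `(c ⊗ b) · a = Σ c·a_{<-1>} ⊗ b·a_{<0>}`. -/
def rActCA : (C ⊗[k] A) ⊗[k] A →ₗ[k] C ⊗[k] A :=
  (TensorProduct.map D.actL (LinearMap.mul' k A)) ∘ₗ
    (TensorProduct.tensorTensorTensorComm k C A H A).toLinearMap ∘ₗ
    (TensorProduct.map LinearMap.id D.ρ)

/-- The right-hand side of condition (a) of `V₃`:
`(c ⊗ d) ⊗ a ↦ Σ a_{<0>} * θ(c·a_{<-2>} ⊗ d·a_{<-1>})`. -/
def V3aRHS (θ : C ⊗[k] C →ₗ[k] A) : (C ⊗[k] C) ⊗[k] A →ₗ[k] A :=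
  (LinearMap.mul' k A) ∘ₗ (TensorProduct.comm k A A).toLinearMap ∘ₗ
    (TensorProduct.map θ LinearMap.id) ∘ₗ
    (TensorProduct.map D.act2 LinearMap.id) ∘ₗ
    (TensorProduct.assoc k (C ⊗[k] C) (H ⊗[k] H) A).symm.toLinearMap ∘ₗ
    (TensorProduct.map LinearMap.id D.ρ2)

/-- The left-hand side of condition (b) of `V₃`: `c ⊗ d ↦ Σ c_(1) ⊗ θ(c_(2) ⊗ d)`. -/
def V3bLHS (_D : DoiHopfDatum k H A C) (θ : C ⊗[k] C →ₗ[k] A) : C ⊗[k] C →ₗ[k] C ⊗[k] A :=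
  (TensorProduct.map LinearMap.id θ) ∘ₗ
    (TensorProduct.assoc k C C C).toLinearMap ∘ₗ
    (TensorProduct.map (Coalgebra.comul (R := k)) LinearMap.id)

/-- The right-hand side of condition (b) of `V₃`:
`c ⊗ d ↦ Σ d_(2)·θ(c ⊗ d_(1))_{<-1>} ⊗ θ(c ⊗ d_(1))_{<0>}`. -/
def V3bRHS (θ : C ⊗[k] C →ₗ[k] A) : C ⊗[k] C →ₗ[k] C ⊗[k] A :=
  (TensorProduct.map D.actL LinearMap.id) ∘ₗ
    (TensorProduct.assoc k C H A).symm.toLinearMap ∘ₗ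
    (TensorProduct.comm k (H ⊗[k] A) C).toLinearMap ∘ₗ
    (TensorProduct.map D.ρ LinearMap.id) ∘ₗ
    (TensorProduct.map θ LinearMap.id) ∘ₗ
    (TensorProduct.assoc k C C C).symm.toLinearMap ∘ₗ
    (TensorProduct.map LinearMap.id (Coalgebra.comul (R := k)))

/-- `θ : C ⊗ C → A` belongs to `V₃`. -/
def IsV3 (θ : C ⊗[k] C →ₗ[k] A) : Prop :=
  (∀ (c d : C) (a : A), θ (c ⊗ₜ[k] d) * a = D.V3aRHS θ ((c ⊗ₜ[k] d) ⊗ₜ[k] a)) ∧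
    D.V3bLHS θ = D.V3bRHS θ

/-- `θ` is normalized: `Σ θ(c_(1) ⊗ c_(2)) = ε(c)1_A`. -/
def IsNormalizedV3 (_D : DoiHopfDatum k H A C) (θ : C ⊗[k] C →ₗ[k] A) : Prop :=
  ∀ c : C, θ (Coalgebra.comul (R := k) c)
    = algebraMap k A (Coalgebra.counit (R := k) c)

/-- An `A`-integral `γ : C → Hom(C,A)` for the Doi-Hopf datum: its uncurried form
lies in `V₃`. -/
def IsAIntegral (γ : C →ₗ[k] (C →ₗ[k] A)) : Prop :=
  D.IsV3 (TensorProduct.lift γ)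

/-- A total `A`-integral: a normalized `A`-integral. -/
def IsTotalAIntegral (γ : C →ₗ[k] (C →ₗ[k] A)) : Prop :=
  D.IsAIntegral γ ∧ D.IsNormalizedV3 (TensorProduct.lift γ)

end DoiHopfDatum

/-- A right-left Doi-Hopf module over the Doi-Hopf datum `D`: a right `A`-module and
left `C`-comodule `M` satisfying `ρ_M(m·a) = Σ m_{<-1>}·a_{<-1>} ⊗ m_{<0>}·a_{<0>}`. -/
structure DHModule {k H A C : Type*} [CommRing k] [Ring H] [Bialgebra k H]
    [Ring A] [Algebra k A] [AddCommGroup C] [Module k C] [Coalgebra k C]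
    (D : DoiHopfDatum k H A C) (M : Type*) [AddCommGroup M] [Module k M] where
  /-- the right `A`-action on `M` -/
  sm : M →ₗ[k] A →ₗ[k] M
  sm_one : ∀ m : M, sm m 1 = m
  sm_mul : ∀ (m : M) (a b : A), sm (sm m a) b = sm m (a * b)
  /-- the left `C`-coaction `ρ_M : M → C ⊗ M` -/
  cρ : M →ₗ[k] C ⊗[k] M
  cρ_coassoc : ∀ m : M,
    (TensorProduct.assoc k C C M)
        ((TensorProduct.map (Coalgebra.comul (R := k)) LinearMap.id) (cρ m))
      = (TensorProduct.map LinearMap.id cρ) (cρ m)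
  cρ_counit : ∀ m : M,
    (TensorProduct.lid k M)
        ((TensorProduct.map (Coalgebra.counit (R := k)) LinearMap.id) (cρ m)) = m
  compat : ∀ (m : M) (a : A),
    cρ (sm m a)
      = (TensorProduct.map D.actL (TensorProduct.lift sm))
          ((TensorProduct.tensorTensorTensorComm k C M H A)
            (cρ m ⊗ₜ[k] D.ρ a))

namespace DoiHopfDatum

variable {k H A C : Type*} [CommRing k] [Ring H] [Bialgebra k H]
    [Ring A] [Algebra k A] [AddCommGroup C] [Module k C] [Coalgebra k C]
variable (D : DoiHopfDatum k H A C)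

/-- The natural transformation attached to `θ : C ⊗ C → A`:
`ν_M (c ⊗ m) = Σ m_{<0>} · θ(c ⊗ m_{<-1>})`. -/
def nuMap (θ : C ⊗[k] C →ₗ[k] A) {M : Type*} [AddCommGroup M] [Module k M]
    (DM : DHModule D M) : C ⊗[k] M →ₗ[k] M :=
  (TensorProduct.lift DM.sm) ∘ₗ (TensorProduct.comm k A M).toLinearMap ∘ₗ
    (TensorProduct.map θ LinearMap.id) ∘ₗ
    (TensorProduct.assoc k C C M).symm.toLinearMap ∘ₗ
    (TensorProduct.map LinearMap.id DM.cρ)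

/-- The right `A`-action on `C ⊗ M`: `(c ⊗ m) · a = Σ c·a_{<-1>} ⊗ m·a_{<0>}`. -/
def actCM {M : Type*} [AddCommGroup M] [Module k M] (DM : DHModule D M) :
    (C ⊗[k] M) ⊗[k] A →ₗ[k] C ⊗[k] M :=
  (TensorProduct.map D.actL (TensorProduct.lift DM.sm)) ∘ₗ
    (TensorProduct.tensorTensorTensorComm k C M H A).toLinearMap ∘ₗ
    (TensorProduct.map LinearMap.id D.ρ)

end DoiHopfDatum

namespace DoiHopfDatum

variable {k H A C : Type*} [CommRing k] [Ring H] [Bialgebra k H]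
    [Ring A] [Algebra k A] [AddCommGroup C] [Module k C] [Coalgebra k C]

/-- The left `A`-action on `C ⊗ A` packaged as a map `(C ⊗ A) ⊗ A → C ⊗ A`,
`(c ⊗ b) ⊗ a ↦ c ⊗ a·b`. -/
def lMulCA (_D : DoiHopfDatum k H A C) : (C ⊗[k] A) ⊗[k] A →ₗ[k] C ⊗[k] A :=
  (TensorProduct.map LinearMap.id
      ((LinearMap.mul' k A) ∘ₗ (TensorProduct.comm k A A).toLinearMap)) ∘ₗ
    (TensorProduct.assoc k C A A).toLinearMap

/-- Condition (i) of `V₂`, left-hand side: with `λ(c ⊗ d_(1)) = Σ_i e_i ⊗ b_i`,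
`c ⊗ d ↦ Σ_i d_(2)·(ε(e_i)(b_i)_{<-1>}) ⊗ (b_i)_{<0>}`. -/
def V2iLHS (D : DoiHopfDatum k H A C) (l : C ⊗[k] C →ₗ[k] C ⊗[k] A) :
    C ⊗[k] C →ₗ[k] C ⊗[k] A :=
  (TensorProduct.map D.actL LinearMap.id) ∘ₗ
    (TensorProduct.assoc k C H A).symm.toLinearMap ∘ₗ
    (TensorProduct.comm k (H ⊗[k] A) C).toLinearMap ∘ₗ
    (TensorProduct.map ((TensorProduct.lid k (H ⊗[k] A)).toLinearMap ∘ₗ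
        (TensorProduct.map (Coalgebra.counit (R := k)) D.ρ)) LinearMap.id) ∘ₗ
    (TensorProduct.map l LinearMap.id) ∘ₗ
    (TensorProduct.assoc k C C C).symm.toLinearMap ∘ₗ
    (TensorProduct.map LinearMap.id (Coalgebra.comul (R := k)))

/-- Condition (ii) of `V₂`, left-hand side:
`(c ⊗ d) ⊗ a ↦ Σ a_{<0>}·λ(c·a_{<-2>} ⊗ d·a_{<-1>})`. -/
def V2iiLHS (D : DoiHopfDatum k H A C) (l : C ⊗[k] C →ₗ[k] C ⊗[k] A) :
    (C ⊗[k] C) ⊗[k] A →ₗ[k] C ⊗[k] A :=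
  D.lMulCA ∘ₗ (TensorProduct.map l LinearMap.id) ∘ₗ
    (TensorProduct.map D.act2 LinearMap.id) ∘ₗ
    (TensorProduct.assoc k (C ⊗[k] C) (H ⊗[k] H) A).symm.toLinearMap ∘ₗ
    (TensorProduct.map LinearMap.id D.ρ2)

/-- `λ : C ⊗ C → C ⊗ A` belongs to `V₂`. -/
def IsV2 (D : DoiHopfDatum k H A C) (l : C ⊗[k] C →ₗ[k] C ⊗[k] A) : Prop :=
  D.V2iLHS l = l ∧
  D.V2iiLHS l = D.rActCA ∘ₗ (TensorProduct.map l LinearMap.id) ∧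
  (TensorProduct.map LinearMap.id l) ∘ₗ
      (TensorProduct.assoc k C C C).toLinearMap ∘ₗ
      (TensorProduct.map (Coalgebra.comul (R := k)) LinearMap.id)
    = (TensorProduct.assoc k C C A).toLinearMap ∘ₗ
      (TensorProduct.map (Coalgebra.comul (R := k)) LinearMap.id) ∘ₗ l

/-- `λ ∈ V₂` is normalized if `Σ λ(c_(1) ⊗ c_(2)) = c ⊗ 1`. -/
def IsNormalizedV2 (_D : DoiHopfDatum k H A C)
    (l : C ⊗[k] C →ₗ[k] C ⊗[k] A) : Prop :=
  ∀ c : C, l (Coalgebra.comul (R := k) c) = c ⊗ₜ[k] (1 : A)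

/-- The assignment `θ ↦ λ_θ`, `λ_θ(c ⊗ d) = Σ c_(1) ⊗ θ(c_(2) ⊗ d)`. -/
def toV2 (D : DoiHopfDatum k H A C) (θ : C ⊗[k] C →ₗ[k] A) :
    C ⊗[k] C →ₗ[k] C ⊗[k] A := D.V3bLHS θ

/-- The assignment `λ ↦ θ_λ = (ε_C ⊗ I_A) ∘ λ`. -/
def toV3 (_D : DoiHopfDatum k H A C) (l : C ⊗[k] C →ₗ[k] C ⊗[k] A) :
    C ⊗[k] C →ₗ[k] A :=
  (TensorProduct.lid k A).toLinearMap ∘ₗ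
    (TensorProduct.map (Coalgebra.counit (R := k)) LinearMap.id) ∘ₗ l

end DoiHopfDatum

namespace DoiHopfDatum

variable {k H A C : Type*} [CommRing k] [Ring H] [Bialgebra k H]
    [Ring A] [Algebra k A] [AddCommGroup C] [Module k C] [Coalgebra k C]
variable (D : DoiHopfDatum k H A C)

/-! ### The two assignments are mutually inverse -/

lemma sum_counit_right_smul {c : C} {ι : Type*} (R : Coalgebra.Repr k c ι) :
    ∑ i ∈ R.index, Coalgebra.counit (R := k) (R.right i) • R.left i = c := by
  have h := congrArg (TensorProduct.rid k C) (Coalgebra.sum_tmul_counit_eq R)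
  simpa only [map_sum, TensorProduct.rid_tmul, one_smul] using h

lemma toV2_tmul (θ : C ⊗[k] C →ₗ[k] A) (c d : C) {ι : Type*}
    (R : Coalgebra.Repr k c ι) :
    D.toV2 θ (c ⊗ₜ[k] d)
      = ∑ i ∈ R.index, R.left i ⊗ₜ[k] θ (R.right i ⊗ₜ[k] d) := by
  simp [toV2, V3bLHS, ← R.eq, TensorProduct.sum_tmul]

lemma toV3_toV2 (θ : C ⊗[k] C →ₗ[k] A) : D.toV3 (D.toV2 θ) = θ := by
  ext c d
  have R := Coalgebra.Repr.arbitrary k c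
  have h := Coalgebra.sum_counit_smul R
  simp only [TensorProduct.AlgebraTensorModule.curry_apply, TensorProduct.curry_apply,
    LinearMap.coe_restrictScalars, toV3, LinearMap.comp_apply, D.toV2_tmul θ c d R,
    map_sum, TensorProduct.map_tmul, LinearEquiv.coe_coe, TensorProduct.lid_tmul,
    LinearMap.id_apply]
  conv_rhs => rw [← h, TensorProduct.sum_tmul, map_sum]
  simp only [← TensorProduct.smul_tmul', map_smul]

/-- Condition (i) for `l` only involves `θ_l = (ε ⊗ I) ∘ l`, and is the right-hand side of (b). -/
lemma V2iLHS_eq (l : C ⊗[k] C →ₗ[k] C ⊗[k] A) : D.V2iLHS l = D.V3bRHS (D.toV3 l) := by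
  have h : (TensorProduct.lid k (H ⊗[k] A)).toLinearMap ∘ₗ
        (TensorProduct.map (Coalgebra.counit (R := k) (A := C)) D.ρ)
      = D.ρ ∘ₗ (TensorProduct.lid k A).toLinearMap ∘ₗ
        (TensorProduct.map (Coalgebra.counit (R := k)) LinearMap.id) := by
    ext c a
    simp
  have h2 : TensorProduct.map (D.toV3 l) (LinearMap.id (R := k) (M := C))
      = TensorProduct.map ((TensorProduct.lid k A).toLinearMap ∘ₗ
        (TensorProduct.map (Coalgebra.counit (R := k)) LinearMap.id)) LinearMap.id ∘ₗ
        TensorProduct.map l LinearMap.id := by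
    rw [← TensorProduct.map_comp]
    rfl
  have h3 : TensorProduct.map (D.ρ ∘ₗ (TensorProduct.lid k A).toLinearMap ∘ₗ
        (TensorProduct.map (Coalgebra.counit (R := k) (A := C)) LinearMap.id))
          (LinearMap.id (R := k) (M := C))
      = TensorProduct.map D.ρ LinearMap.id ∘ₗ
        TensorProduct.map ((TensorProduct.lid k A).toLinearMap ∘ₗ
        (TensorProduct.map (Coalgebra.counit (R := k)) LinearMap.id)) LinearMap.id := by
    rw [← TensorProduct.map_comp]
    rfl
  rw [V2iLHS, V3bRHS, h, h2, h3]
  simp only [LinearMap.comp_assoc]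

/-- Applying `I ⊗ ε ⊗ I` to condition (iii) recovers `l` from `θ_l`. -/
lemma toV2_toV3 (l : C ⊗[k] C →ₗ[k] C ⊗[k] A)
    (h : (TensorProduct.map LinearMap.id l) ∘ₗ
      (TensorProduct.assoc k C C C).toLinearMap ∘ₗ
      (TensorProduct.map (Coalgebra.comul (R := k)) LinearMap.id)
    = (TensorProduct.assoc k C C A).toLinearMap ∘ₗ
      (TensorProduct.map (Coalgebra.comul (R := k)) LinearMap.id) ∘ₗ l) :
    D.toV2 (D.toV3 l) = l := by
  let E : C ⊗[k] (C ⊗[k] A) →ₗ[k] C ⊗[k] A :=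
    TensorProduct.map LinearMap.id ((TensorProduct.lid k A).toLinearMap ∘ₗ
        (TensorProduct.map (Coalgebra.counit (R := k)) LinearMap.id))
  have h1 : D.toV2 (D.toV3 l) = E ∘ₗ (TensorProduct.map LinearMap.id l) ∘ₗ
      (TensorProduct.assoc k C C C).toLinearMap ∘ₗ
      (TensorProduct.map (Coalgebra.comul (R := k)) LinearMap.id) := by
    simp only [← LinearMap.comp_assoc, E, ← TensorProduct.map_comp]
    rfl
  have h2 : E ∘ₗ (TensorProduct.assoc k C C A).toLinearMap ∘ₗ
      (TensorProduct.map (Coalgebra.comul (R := k)) LinearMap.id) = LinearMap.id := by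
    ext c a
    have R := Coalgebra.Repr.arbitrary k c
    have hc := sum_counit_right_smul R
    simp only [E, TensorProduct.AlgebraTensorModule.curry_apply, TensorProduct.curry_apply,
      LinearMap.coe_restrictScalars, LinearMap.comp_apply, TensorProduct.map_tmul, ← R.eq,
      TensorProduct.sum_tmul, map_sum, LinearEquiv.coe_coe, TensorProduct.assoc_tmul,
      TensorProduct.lid_tmul, LinearMap.id_apply]
    conv_rhs => rw [← hc, TensorProduct.sum_tmul]
    simp [TensorProduct.smul_tmul]
  rw [h1, h]
  exact LinearMap.ext fun z => LinearMap.congr_fun h2 (l z)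

/-! ### Conditions (a) and (ii) -/

/-- The map `g ⊗ (h ⊗ b) ↦ b θ(x·g ⊗ d·h)`. -/
def twist (θ : C ⊗[k] C →ₗ[k] A) (x d : C) : H ⊗[k] (H ⊗[k] A) →ₗ[k] A :=
  (LinearMap.mul' k A) ∘ₗ (TensorProduct.comm k A A).toLinearMap ∘ₗ
    (TensorProduct.map (θ ∘ₗ TensorProduct.map (D.act x) (D.act d)) LinearMap.id) ∘ₗ
    (TensorProduct.assoc k H H A).symm.toLinearMap

@[simp]
lemma twist_tmul (θ : C ⊗[k] C →ₗ[k] A) (x d : C) (g h : H) (b : A) :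
    D.twist θ x d (g ⊗ₜ[k] (h ⊗ₜ[k] b)) = b * θ (D.act x g ⊗ₜ[k] D.act d h) := by
  simp [twist]

lemma V3aRHS_eq (θ : C ⊗[k] C →ₗ[k] A) (x d : C) (a : A) :
    D.V3aRHS θ ((x ⊗ₜ[k] d) ⊗ₜ[k] a)
      = D.twist θ x d (TensorProduct.map LinearMap.id D.ρ (D.ρ a)) := by
  simp only [V3aRHS, ρ2, LinearMap.comp_apply, TensorProduct.map_tmul, LinearMap.id_apply]
  generalize TensorProduct.map LinearMap.id D.ρ (D.ρ a) = y
  induction y with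
  | zero => simp
  | add y z hy hz => simp only [map_add, TensorProduct.tmul_add, hy, hz]
  | tmul g z =>
    induction z with
    | zero => simp
    | add y z hy hz => simp only [map_add, TensorProduct.tmul_add, hy, hz]
    | tmul h b => simp [act2, actL]

/-- Multiplicativity of `Δ_C` moves the comultiplication of `c·a_{<-2>}` onto `a_{<-2>}`. -/
lemma V2iiLHS_toV2 (θ : C ⊗[k] C →ₗ[k] A) (c d : C) (a : A) {ι : Type*}
    (R : Coalgebra.Repr k c ι) :
    D.V2iiLHS (D.toV2 θ) ((c ⊗ₜ[k] d) ⊗ₜ[k] a)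
      = ∑ i ∈ R.index, TensorProduct.map (D.act (R.left i)) (D.twist θ (R.right i) d)
          (TensorProduct.assoc k H H (H ⊗[k] A)
            (TensorProduct.map (Coalgebra.comul (R := k)) LinearMap.id
              (TensorProduct.map LinearMap.id D.ρ (D.ρ a)))) := by
  simp only [V2iiLHS, ρ2, LinearMap.comp_apply, TensorProduct.map_tmul, LinearMap.id_apply]
  generalize TensorProduct.map LinearMap.id D.ρ (D.ρ a) = y
  induction y with
  | zero => simp
  | add y z hy hz => simp only [map_add, TensorProduct.tmul_add, hy, hz, Finset.sum_add_distrib]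
  | tmul g z =>
    induction z with
    | zero => simp
    | add y z hy hz => simp only [map_add, TensorProduct.tmul_add, hy, hz, Finset.sum_add_distrib]
    | tmul h b =>
      have S := Coalgebra.Repr.arbitrary k g
      simp only [LinearEquiv.coe_coe, TensorProduct.assoc_symm_tmul, TensorProduct.map_tmul,
        LinearMap.id_apply, act2, actL, LinearMap.comp_apply,
        TensorProduct.tensorTensorTensorComm_tmul, TensorProduct.lift.tmul, toV2, V3bLHS,
        D.comul_act, lMulCA, ← R.eq, ← S.eq, TensorProduct.sum_tmul, TensorProduct.tmul_sum,
        map_sum, TensorProduct.assoc_tmul, TensorProduct.comm_tmul, LinearMap.mul'_apply,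
        twist_tmul]
      exact Finset.sum_comm

/-- The two ways of expanding `Σ a_{<-3>} ⊗ a_{<-2>} ⊗ a_{<-1>} ⊗ a_{<0>}` agree. -/
lemma ρ_coassoc3 (a : A) :
    TensorProduct.assoc k H H (H ⊗[k] A)
        (TensorProduct.map (Coalgebra.comul (R := k)) LinearMap.id
          (TensorProduct.map LinearMap.id D.ρ (D.ρ a)))
      = TensorProduct.map LinearMap.id (TensorProduct.map LinearMap.id D.ρ ∘ₗ D.ρ) (D.ρ a) := by
  have h : ∀ y : H ⊗[k] A, TensorProduct.assoc k H H (H ⊗[k] A)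
        (TensorProduct.map (Coalgebra.comul (R := k)) LinearMap.id
          (TensorProduct.map LinearMap.id D.ρ y))
      = TensorProduct.map LinearMap.id (TensorProduct.map LinearMap.id D.ρ)
        (TensorProduct.assoc k H H A
          (TensorProduct.map (Coalgebra.comul (R := k)) LinearMap.id y)) := by
    intro y
    induction y with
    | zero => simp
    | add y z hy hz => simp only [map_add, hy, hz]
    | tmul g b =>
      have S := Coalgebra.Repr.arbitrary k g
      simp [← S.eq, TensorProduct.sum_tmul]
  rw [h, D.ρ_coassoc, ← LinearMap.comp_apply, ← TensorProduct.map_comp, LinearMap.id_comp]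

lemma rActCA_toV2 (θ : C ⊗[k] C →ₗ[k] A) (c d : C) (a : A) {ι : Type*}
    (R : Coalgebra.Repr k c ι) :
    D.rActCA (D.toV2 θ (c ⊗ₜ[k] d) ⊗ₜ[k] a)
      = ∑ i ∈ R.index, TensorProduct.map (D.act (R.left i))
          (LinearMap.mulLeft k (θ (R.right i ⊗ₜ[k] d))) (D.ρ a) := by
  simp only [rActCA, LinearMap.comp_apply, TensorProduct.map_tmul, LinearMap.id_apply,
    D.toV2_tmul θ c d R]
  generalize D.ρ a = y
  induction y with
  | zero => simp
  | add y z hy hz => simp only [map_add, TensorProduct.tmul_add, hy, hz, Finset.sum_add_distrib]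
  | tmul g b => simp [TensorProduct.sum_tmul, actL]

lemma toV2_ii (θ : C ⊗[k] C →ₗ[k] A)
    (ha : ∀ (c d : C) (a : A),
      θ (c ⊗ₜ[k] d) * a = D.V3aRHS θ ((c ⊗ₜ[k] d) ⊗ₜ[k] a)) :
    D.V2iiLHS (D.toV2 θ) = D.rActCA ∘ₗ (TensorProduct.map (D.toV2 θ) LinearMap.id) := by
  have hT : ∀ x d : C, LinearMap.mulLeft k (θ (x ⊗ₜ[k] d))
      = D.twist θ x d ∘ₗ TensorProduct.map LinearMap.id D.ρ ∘ₗ D.ρ := by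
    intro x d
    ext a
    simp only [LinearMap.mulLeft_apply, ha, V3aRHS_eq, LinearMap.comp_apply]
  refine TensorProduct.ext_threefold fun c d a => ?_
  have R := Coalgebra.Repr.arbitrary k c
  rw [LinearMap.comp_apply, TensorProduct.map_tmul, LinearMap.id_apply,
    D.rActCA_toV2 θ c d a R, D.V2iiLHS_toV2 θ c d a R, ρ_coassoc3]
  refine Finset.sum_congr rfl fun i _ => ?_
  rw [hT, ← LinearMap.comp_apply, ← TensorProduct.map_comp, LinearMap.comp_id]

/-! ### Condition (iii) -/

lemma toV2_iii (θ : C ⊗[k] C →ₗ[k] A) :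
    (TensorProduct.map LinearMap.id (D.toV2 θ)) ∘ₗ
      (TensorProduct.assoc k C C C).toLinearMap ∘ₗ
      (TensorProduct.map (Coalgebra.comul (R := k)) LinearMap.id)
    = (TensorProduct.assoc k C C A).toLinearMap ∘ₗ
      (TensorProduct.map (Coalgebra.comul (R := k)) LinearMap.id) ∘ₗ (D.toV2 θ) := by
  ext c d
  -- both sides are images of the two iterated comultiplications of `c` under `F`
  let F : C ⊗[k] (C ⊗[k] C) →ₗ[k] C ⊗[k] (C ⊗[k] A) :=
    TensorProduct.map LinearMap.id (TensorProduct.map LinearMap.id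
      (θ ∘ₗ (TensorProduct.mk k C C).flip d))
  have h := congrArg F (Coalgebra.coassoc_apply (R := k) c)
  have R := Coalgebra.Repr.arbitrary k c
  have h1 : ∀ x : C, TensorProduct.map LinearMap.id (θ ∘ₗ (TensorProduct.mk k C C).flip d)
      (Coalgebra.comul (R := k) x) = D.toV2 θ (x ⊗ₜ[k] d) := by
    intro x
    have S := Coalgebra.Repr.arbitrary k x
    rw [D.toV2_tmul θ x d S, ← S.eq]
    simp
  have h2 : ∀ x y : C, F (TensorProduct.assoc k C C C (Coalgebra.comul (R := k) x ⊗ₜ[k] y))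
      = TensorProduct.assoc k C C A
        (Coalgebra.comul (R := k) x ⊗ₜ[k] θ (y ⊗ₜ[k] d)) := by
    intro x y
    have S := Coalgebra.Repr.arbitrary k x
    rw [← S.eq]
    simp [TensorProduct.sum_tmul, F]
  have h3 : ∀ x y : C, F (x ⊗ₜ[k] Coalgebra.comul (R := k) y)
      = x ⊗ₜ[k] D.toV2 θ (y ⊗ₜ[k] d) := by
    intro x y
    rw [← h1]
    simp [F]
  rw [← R.eq] at h
  simp only [map_sum, LinearMap.rTensor_tmul, LinearMap.lTensor_tmul, h2, h3] at h
  simp only [TensorProduct.AlgebraTensorModule.curry_apply, TensorProduct.curry_apply,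
    LinearMap.coe_restrictScalars, LinearMap.comp_apply, D.toV2_tmul θ c d R,
    TensorProduct.map_tmul, map_sum, LinearEquiv.coe_coe, LinearMap.id_apply]
  rw [h, ← R.eq]
  simp [TensorProduct.sum_tmul]

/-! ### From (ii) back to (a) -/

/-- Condition (a) for `θ_l` is `ε ⊗ I` applied to condition (ii) for `l`. -/
lemma toV3_a (l : C ⊗[k] C →ₗ[k] C ⊗[k] A)
    (h : D.V2iiLHS l = D.rActCA ∘ₗ (TensorProduct.map l LinearMap.id)) (c d : C) (a : A) :
    D.toV3 l (c ⊗ₜ[k] d) * a = D.V3aRHS (D.toV3 l) ((c ⊗ₜ[k] d) ⊗ₜ[k] a) := by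
  let E : C ⊗[k] A →ₗ[k] A := (TensorProduct.lid k A).toLinearMap ∘ₗ
    (TensorProduct.map (Coalgebra.counit (R := k)) LinearMap.id)
  have hl : D.toV3 l = E ∘ₗ l := rfl
  have h1 : E ∘ₗ D.lMulCA = LinearMap.mul' k A ∘ₗ (TensorProduct.comm k A A).toLinearMap ∘ₗ
      TensorProduct.map E LinearMap.id := by
    refine TensorProduct.ext_threefold fun e b a => ?_
    simp [E, lMulCA]
  have h2 : ∀ (z : C ⊗[k] A), E (D.rActCA (z ⊗ₜ[k] a)) = E z * a := by
    intro z
    induction z with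
    | zero => simp
    | add y z hy hz => simp only [map_add, TensorProduct.add_tmul, hy, hz, add_mul]
    | tmul e b =>
      have h3 : ∀ y : H ⊗[k] A,
          E (TensorProduct.map D.actL (LinearMap.mul' k A)
            (TensorProduct.tensorTensorTensorComm k C A H A ((e ⊗ₜ[k] b) ⊗ₜ[k] y)))
          = E (e ⊗ₜ[k] b) * TensorProduct.lid k A
            (TensorProduct.map (Coalgebra.counit (R := k)) LinearMap.id y) := by
        intro y
        induction y with
        | zero => simp
        | add y z hy hz => simp only [map_add, TensorProduct.tmul_add, hy, hz, mul_add]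
        | tmul g b' =>
          simp only [E, actL, D.counit_act, LinearMap.comp_apply, LinearEquiv.coe_coe,
            TensorProduct.tensorTensorTensorComm_tmul, TensorProduct.map_tmul,
            TensorProduct.lift.tmul, TensorProduct.lid_tmul, LinearMap.id_apply,
            LinearMap.mul'_apply, smul_mul_smul_comm]
      have := h3 (D.ρ a)
      rw [D.ρ_counit] at this
      simpa [rActCA] using this
  have h4 : E (D.V2iiLHS l ((c ⊗ₜ[k] d) ⊗ₜ[k] a))
      = D.V3aRHS (D.toV3 l) ((c ⊗ₜ[k] d) ⊗ₜ[k] a) := by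
    have h5 : E ∘ₗ D.V2iiLHS l = D.V3aRHS (D.toV3 l) := by
      have h6 : TensorProduct.map (E ∘ₗ l) (LinearMap.id (R := k) (M := A))
          = TensorProduct.map E LinearMap.id ∘ₗ TensorProduct.map l LinearMap.id := by
        rw [← TensorProduct.map_comp, LinearMap.id_comp]
      rw [V2iiLHS, V3aRHS, ← LinearMap.comp_assoc, h1, hl, h6]
      simp only [LinearMap.comp_assoc]
    exact LinearMap.congr_fun h5 _
  rw [← h4, h]
  exact (h2 (l (c ⊗ₜ[k] d))).symm

/-! ### Normalization -/

lemma normalized_iff (θ : C ⊗[k] C →ₗ[k] A) :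
    D.IsNormalizedV3 θ ↔ D.IsNormalizedV2 (D.toV2 θ) := by
  constructor
  · intro h c
    -- `λ_θ(c_(1) ⊗ c_(2)) = c_(1) ⊗ θ(c_(2) ⊗ c_(3)) = c_(1) ⊗ ε(c_(2))1`
    have R := Coalgebra.Repr.arbitrary k c
    have hassoc : TensorProduct.assoc k C C C
        (TensorProduct.map (Coalgebra.comul (R := k)) LinearMap.id (Coalgebra.comul (R := k) c))
        = Coalgebra.comul.lTensor C (Coalgebra.comul (R := k) c) :=
      Coalgebra.coassoc_apply c
    have hcu := sum_counit_right_smul R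
    rw [toV2, V3bLHS, LinearMap.comp_apply, LinearMap.comp_apply, LinearEquiv.coe_coe, hassoc,
      ← R.eq]
    simp only [map_sum, LinearMap.lTensor_tmul, TensorProduct.map_tmul, LinearMap.id_apply, h _]
    conv_rhs => rw [← hcu, TensorProduct.sum_tmul]
    simp [Algebra.algebraMap_eq_smul_one, TensorProduct.smul_tmul]
  · intro h c
    have h1 := congrArg (fun f => f (Coalgebra.comul (R := k) c)) (D.toV3_toV2 θ)
    simp only [toV3, LinearMap.comp_apply, h c] at h1
    rw [← h1]
    simp [Algebra.algebraMap_eq_smul_one]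

end DoiHopfDatum

/-- the assignments `θ ↦ λ_θ` (where `λ_θ(c⊗d) = Σ c_(1) ⊗ θ(c_(2)⊗d)`)
and `λ ↦ θ_λ = (ε_C ⊗ I_A) ∘ λ` are mutually inverse bijections between `V₃` and `V₂`,
and `θ` is normalized if and only if `λ_θ` is normalized. -/
theorem V3_V2_bijection
    {k H A C : Type*} [CommRing k] [Ring H] [Bialgebra k H]
    [Ring A] [Algebra k A] [AddCommGroup C] [Module k C] [Coalgebra k C]
    (D : DoiHopfDatum k H A C) :
    (∀ θ : C ⊗[k] C →ₗ[k] A, D.IsV3 θ → D.IsV2 (D.toV2 θ)) ∧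
    (∀ l : C ⊗[k] C →ₗ[k] C ⊗[k] A, D.IsV2 l → D.IsV3 (D.toV3 l)) ∧
    (∀ θ : C ⊗[k] C →ₗ[k] A, D.IsV3 θ → D.toV3 (D.toV2 θ) = θ) ∧
    (∀ l : C ⊗[k] C →ₗ[k] C ⊗[k] A, D.IsV2 l → D.toV2 (D.toV3 l) = l) ∧
    (∀ θ : C ⊗[k] C →ₗ[k] A, D.IsV3 θ →
      (D.IsNormalizedV3 θ ↔ D.IsNormalizedV2 (D.toV2 θ))) := by
  refine ⟨fun θ h => ⟨?_, D.toV2_ii θ h.1, D.toV2_iii θ⟩,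
    fun l h => ⟨D.toV3_a l h.2.1, ?_⟩, fun θ _ => D.toV3_toV2 θ,
    fun l h => D.toV2_toV3 l h.2.2, fun θ _ => D.normalized_iff θ⟩
  · rw [D.V2iLHS_eq, D.toV3_toV2, ← h.2]
    rfl
  · rw [← D.V2iLHS_eq, h.1]
    exact D.toV2_toV3 l h.2.2
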